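/- arXiv:2002.11482 — 4 statements merged into one kernel-verified Lean document; each statement's English description precedes it below -/
import Mathlib

section
/- Let y = exp(7·π·i/4) ∈ ℂ and b_l = 2·i·sin(7·π·l/8) for positive integers l. Define B44 = (b_6·b_3)/(b_5·b_4) − (b_1^2·(b_4 + b_6))/(b_5^2·b_6), B23 = y·(b_6·b_7)/(b_4·b_5), B43 = y^2·(b_1·b_6)/(b_4·b_5), and B24 = −y^{−3}·( (b_1·b_7·(b_4 + b_6))/(b_5^2·b_4) + (b_1·b_7·(b_5 + b_7))/(b_6^2·b_5) ). Then B44·B23 − B43·B24 = (√2 − 1)/2 + ((3 − 2√2)/2)·i; in particular B44·B23 − B43·B24 ≠ 0. -/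
/-!
At an angle `θ = pπ/8` with `p` odd the brackets `[l] = 2i sin(lθ)` satisfy `[8 - l] = [l]`, so only
`[1], …, [4]` occur in the braiding matrices, and the product formulas for sines tie these together:
with `c = cos(pπ/4)`, so that `2c² = 1`, one has `[2] = c[4]`, `[3]([4] - [2]) = [1][2]`,
`[1]([4] + [2]) = [2][3]` and `[1]([3] + [1]) = [2]²`. The four entries collapse to
`B44 = 1 - c`, `B23 = y(1 - c)`, `B43 = y²(1 - c)`, `B24 = -y⁻³c`, and the determinant to
`(1 - c)((1 - c)y + cy⁻¹)`. For `p = 7` we have `c = √2/2` and `y = c(1 - i)`.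
-/

open Real

/-- The quantum bracket `[l]′ = y^(l/2) - y^(-l/2)` at `y = exp(2iθ)`. The minimal model with Kac
parameters `p, p′` has `θ = pπ/p′`. Indices are integers so that subtraction is not truncated. -/
noncomputable def qBracket (θ : ℝ) (l : ℤ) : ℂ :=
  2 * Complex.I * Real.sin (l * θ)

section Angle

variable (θ : ℝ) (k l : ℤ)

theorem qBracket_two_mul : qBracket θ (2 * l) = 2 * Real.cos (l * θ) * qBracket θ l := by
  simp only [qBracket, Int.cast_mul, Int.cast_ofNat, mul_assoc, Real.sin_two_mul]
  push_cast
  ring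

theorem qBracket_add_add_qBracket_sub :
    qBracket θ (l + k) + qBracket θ (l - k) = 2 * Real.cos (k * θ) * qBracket θ l := by
  simp only [qBracket, Int.cast_add, Int.cast_sub, add_mul, sub_mul, Real.sin_add, Real.sin_sub]
  push_cast
  ring

theorem qBracket_add_sub_qBracket_sub :
    qBracket θ (l + k) - qBracket θ (l - k) = 2 * Real.cos (l * θ) * qBracket θ k := by
  simp only [qBracket, Int.cast_add, Int.cast_sub, add_mul, sub_mul, Real.sin_add, Real.sin_sub]
  push_cast
  ring

theorem qBracket_mul_add :
    qBracket θ k * (qBracket θ (l + k) + qBracket θ (l - k)) =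
      qBracket θ (2 * k) * qBracket θ l := by
  rw [qBracket_add_add_qBracket_sub, qBracket_two_mul]
  ring

theorem qBracket_mul_sub :
    qBracket θ l * (qBracket θ (l + k) - qBracket θ (l - k)) =
      qBracket θ (2 * l) * qBracket θ k := by
  rw [qBracket_add_sub_qBracket_sub, qBracket_two_mul]
  ring

end Angle

section RationalAngle

variable {p q : ℤ}

theorem qBracket_sub_of_odd (hp : Odd p) (hq : q ≠ 0) (l : ℤ) :
    qBracket (p * π / q) (q - l) = qBracket (p * π / q) l := by
  have hq' : (q : ℝ) ≠ 0 := mod_cast hq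
  have harg : ((q - l : ℤ) : ℝ) * (p * π / q) = p * π - l * (p * π / q) := by
    push_cast
    field_simp
  rw [qBracket, harg, Real.sin_int_mul_pi_sub, hp.neg_one_zpow, neg_one_mul, neg_neg, qBracket]

theorem qBracket_eq_zero_iff (hq : q ≠ 0) (l : ℤ) :
    qBracket (p * π / q) l = 0 ↔ q ∣ l * p := by
  have hq' : (q : ℝ) ≠ 0 := mod_cast hq
  have hcancel (n : ℤ) : n * π = l * (p * π / q) ↔ l * p = q * n := by
    rw [← mul_div_assoc, eq_div_iff hq', ← mul_assoc, mul_right_comm,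
      mul_left_inj' pi_ne_zero, eq_comm, mul_comm (n : ℝ)]
    norm_cast
  simp only [qBracket, mul_eq_zero, OfNat.ofNat_ne_zero, Complex.I_ne_zero, or_self, false_or,
    Complex.ofReal_eq_zero, Real.sin_eq_zero_iff, hcancel, dvd_def]

end RationalAngle

section Eighth

variable {p : ℤ}

local notation "β" => qBracket (p * π / 8)

theorem two_mul_cos_odd_mul_pi_div_four_sq (hp : Odd p) :
    2 * (Real.cos (p * π / 4) : ℂ) ^ 2 = 1 := by
  have hcos : Real.cos (2 * (p * π / 4)) = 0 := by
    obtain ⟨k, rfl⟩ := hp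
    exact Real.cos_eq_zero_iff.2 ⟨k, by push_cast; ring⟩
  rw [Real.cos_two_mul, sub_eq_zero] at hcos
  exact_mod_cast hcos

theorem qBracket_eight_sub (hp : Odd p) (l : ℤ) : β (8 - l) = β l :=
  mod_cast qBracket_sub_of_odd hp (q := 8) (by norm_num) l

theorem qBracket_eighth_five (hp : Odd p) : β 5 = β 3 := qBracket_eight_sub hp 3

theorem qBracket_eighth_six (hp : Odd p) : β 6 = β 2 := qBracket_eight_sub hp 2

theorem qBracket_eighth_seven (hp : Odd p) : β 7 = β 1 := qBracket_eight_sub hp 1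

theorem qBracket_eighth_ne_zero (hp : Odd p) {l : ℤ} (hl : ¬ 8 ∣ l) : β l ≠ 0 := by
  have hcop : IsCoprime (8 : ℤ) p := by
    simpa using (Int.isCoprime_two_left.2 hp).pow_left (m := 3)
  have hiff := qBracket_eq_zero_iff (p := p) (q := 8) (by norm_num) l
  rw [Int.cast_ofNat] at hiff
  exact fun h ↦ hl (hcop.dvd_of_dvd_mul_right (hiff.1 h))

theorem qBracket_eighth_two (hp : Odd p) : β 2 = Real.cos (p * π / 4) * β 4 := by
  have hfour : β 4 = 2 * Real.cos ((2 : ℤ) * (p * π / 8)) * β 2 := qBracket_two_mul _ 2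
  rw [show ((2 : ℤ) : ℝ) * (p * π / 8) = p * π / 4 by push_cast; ring] at hfour
  linear_combination
    -Real.cos (p * π / 4) * hfour - β 2 * two_mul_cos_odd_mul_pi_div_four_sq hp

theorem qBracket_eighth_three_mul_sub (hp : Odd p) : β 3 * (β 4 - β 2) = β 1 * β 2 :=
  calc
    β 3 * (β 4 - β 2) = β 6 * β 1 := qBracket_mul_sub _ 1 3
    _ = β 1 * β 2 := by rw [qBracket_eighth_six hp, mul_comm]

theorem qBracket_eighth_one_sq_mul_add (hp : Odd p) :
    β 1 ^ 2 * (β 4 + β 2) = β 3 ^ 2 * (β 4 - β 2) := by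
  have hadd : β 1 * (β 4 + β 2) = β 2 * β 3 := qBracket_mul_add _ 1 3
  linear_combination β 1 * hadd - β 3 * qBracket_eighth_three_mul_sub hp

theorem qBracket_eighth_two_div_four (hp : Odd p) : β 2 / β 4 = Real.cos (p * π / 4) := by
  rw [qBracket_eighth_two hp, mul_div_cancel_right₀ _ (qBracket_eighth_ne_zero hp (by norm_num))]

theorem qBracket_eighth_four_div_two (hp : Odd p) : β 4 / β 2 = 2 * Real.cos (p * π / 4) := by
  rw [div_eq_iff (qBracket_eighth_ne_zero hp (by norm_num)), qBracket_eighth_two hp]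
  linear_combination -β 4 * two_mul_cos_odd_mul_pi_div_four_sq hp

theorem qBracket_eighth_one_div_three (hp : Odd p) :
    β 1 / β 3 = 2 * Real.cos (p * π / 4) - 1 := by
  have h2 : β 2 ≠ 0 := qBracket_eighth_ne_zero hp (by norm_num)
  have h3 : β 3 ≠ 0 := qBracket_eighth_ne_zero hp (by norm_num)
  calc
    β 1 / β 3 = (β 4 - β 2) / β 2 := by
      rw [div_eq_div_iff h3 h2, ← qBracket_eighth_three_mul_sub hp, mul_comm]
    _ = 2 * Real.cos (p * π / 4) - 1 := by
      rw [sub_div, div_self h2, qBracket_eighth_four_div_two hp]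

theorem qBracket_eighth_one_mul_two_div (hp : Odd p) :
    β 1 * β 2 / (β 4 * β 3) = 1 - Real.cos (p * π / 4) := by
  rw [mul_comm (β 1), mul_div_mul_comm, qBracket_eighth_two_div_four hp,
    qBracket_eighth_one_div_three hp]
  linear_combination two_mul_cos_odd_mul_pi_div_four_sq hp

theorem braiding_four_four (hp : Odd p) :
    (β 6 * β 3) / (β 5 * β 4) - (β 1 ^ 2 * (β 4 + β 6)) / (β 5 ^ 2 * β 6) =
      1 - Real.cos (p * π / 4) := by
  have h2 : β 2 ≠ 0 := qBracket_eighth_ne_zero hp (by norm_num)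
  have h3 : β 3 ≠ 0 := qBracket_eighth_ne_zero hp (by norm_num)
  calc
    _ = β 2 * β 3 / (β 4 * β 3) - β 1 ^ 2 * (β 4 + β 2) / (β 3 ^ 2 * β 2) := by
      rw [qBracket_eighth_five hp, qBracket_eighth_six hp, mul_comm (β 3) (β 4)]
    _ = β 2 / β 4 - (β 4 / β 2 - 1) := by
      rw [qBracket_eighth_one_sq_mul_add hp, mul_div_mul_right _ _ h3,
        mul_div_mul_left _ _ (pow_ne_zero 2 h3), sub_div, div_self h2]
    _ = 1 - Real.cos (p * π / 4) := by
      rw [qBracket_eighth_two_div_four hp, qBracket_eighth_four_div_two hp]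
      ring

theorem braiding_two_three (hp : Odd p) (y : ℂ) :
    y * (β 6 * β 7) / (β 4 * β 5) = y * (1 - Real.cos (p * π / 4)) := by
  rw [qBracket_eighth_five hp, qBracket_eighth_six hp, qBracket_eighth_seven hp, mul_comm (β 2),
    mul_div_assoc, qBracket_eighth_one_mul_two_div hp]

theorem braiding_four_three (hp : Odd p) (y : ℂ) :
    y ^ 2 * (β 1 * β 6) / (β 4 * β 5) = y ^ 2 * (1 - Real.cos (p * π / 4)) := by
  rw [qBracket_eighth_five hp, qBracket_eighth_six hp, mul_div_assoc,
    qBracket_eighth_one_mul_two_div hp]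

theorem braiding_two_four (hp : Odd p) (y : ℂ) :
    -(y ^ (-3 : ℤ)) * ((β 1 * β 7 * (β 4 + β 6)) / (β 5 ^ 2 * β 4) +
      (β 1 * β 7 * (β 5 + β 7)) / (β 6 ^ 2 * β 5)) =
      -(y ^ (-3 : ℤ)) * Real.cos (p * π / 4) := by
  have h2 : β 2 ≠ 0 := qBracket_eighth_ne_zero hp (by norm_num)
  have h3 : β 3 ≠ 0 := qBracket_eighth_ne_zero hp (by norm_num)
  have h4 : β 4 ≠ 0 := qBracket_eighth_ne_zero hp (by norm_num)
  have hadd : β 1 * (β 3 + β 1) = β 2 ^ 2 := (qBracket_mul_add _ 1 2).trans (sq _).symm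
  congr 1
  calc
    _ = β 1 ^ 2 * (β 4 + β 2) / (β 3 ^ 2 * β 4) +
        β 1 * (β 3 + β 1) * β 1 / (β 2 ^ 2 * β 3) := by
      rw [qBracket_eighth_five hp, qBracket_eighth_six hp, qBracket_eighth_seven hp, ← sq,
        mul_right_comm (β 1), ← sq]
    _ = 1 - β 2 / β 4 + β 1 / β 3 := by
      rw [qBracket_eighth_one_sq_mul_add hp, hadd, mul_div_mul_left _ _ (pow_ne_zero 2 h3),
        mul_div_mul_left _ _ (pow_ne_zero 2 h2), sub_div, div_self h4]
    _ = Real.cos (p * π / 4) := by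
      rw [qBracket_eighth_two_div_four hp, qBracket_eighth_one_div_three hp]
      ring

end Eighth

theorem cos_seven_mul_pi_div_four : Real.cos (7 * π / 4) = √2 / 2 := by
  rw [show 7 * π / 4 = 2 * π - π / 4 by ring, Real.cos_two_pi_sub, Real.cos_pi_div_four]

theorem sin_seven_mul_pi_div_four : Real.sin (7 * π / 4) = -(√2 / 2) := by
  rw [show 7 * π / 4 = 2 * π - π / 4 by ring, Real.sin_two_pi_sub, Real.sin_pi_div_four]

theorem exp_seven_mul_pi_mul_I_div_four :
    Complex.exp (7 * π * Complex.I / 4) = √2 / 2 * (1 - Complex.I) := by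
  have harg : 7 * π * Complex.I / 4 = (7 * π / 4 : ℝ) * Complex.I := by
    push_cast
    ring
  rw [harg, Complex.exp_mul_I, ← Complex.ofReal_cos, ← Complex.ofReal_sin,
    cos_seven_mul_pi_div_four, sin_seven_mul_pi_div_four]
  push_cast
  ring

theorem exp_seven_mul_pi_mul_I_div_four_inv :
    (Complex.exp (7 * π * Complex.I / 4))⁻¹ = √2 / 2 * (1 + Complex.I) := by
  have hsqrt : (√2 : ℂ) ^ 2 = 2 := mod_cast Real.sq_sqrt zero_le_two
  rw [exp_seven_mul_pi_mul_I_div_four]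
  refine inv_eq_of_mul_eq_one_right ?_
  linear_combination (1 - Complex.I ^ 2) / 4 * hsqrt - Complex.I_sq / 2

theorem mul_mul_sub_sq_mul_mul_neg_zpow {K : Type*} [Field K] {y : K} (hy : y ≠ 0) (a c : K) :
    a * (y * a) - y ^ 2 * a * (-(y ^ (-3 : ℤ)) * c) = a * (a * y + c * y⁻¹) := by
  have hpow : y ^ 2 * y ^ (-3 : ℤ) = y⁻¹ := by
    rw [← zpow_natCast, ← zpow_add₀ hy, ← zpow_neg_one]
    norm_num
  linear_combination a * c * hpow

theorem one_sub_sqrt_two_mul_exp_add_exp_inv :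
    (1 - √2 / 2) * ((1 - √2 / 2) * Complex.exp (7 * π * Complex.I / 4) +
      √2 / 2 * (Complex.exp (7 * π * Complex.I / 4))⁻¹) =
      ((√2 - 1) / 2 : ℂ) + (((3 - 2 * √2) / 2 : ℝ) : ℂ) * Complex.I := by
  have hsqrt : (√2 : ℂ) ^ 2 = 2 := mod_cast Real.sq_sqrt zero_le_two
  rw [exp_seven_mul_pi_mul_I_div_four_inv, exp_seven_mul_pi_mul_I_div_four]
  push_cast
  linear_combination (-1 + (3 - √2) * Complex.I) / 4 * hsqrt

theorem sqrt_two_sub_one_add_mul_I_ne_zero :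
    ((√2 - 1) / 2 : ℂ) + (((3 - 2 * √2) / 2 : ℝ) : ℂ) * Complex.I ≠ 0 := by
  intro h
  have hre : (√2 - 1) / 2 = 0 := by
    simpa using congrArg Complex.re h
  linarith [Real.one_lt_sqrt_two]

theorem qBracket_seven_mul_pi_div_eight (l : ℕ) :
    qBracket ((7 : ℤ) * π / 8) l = 2 * Complex.I * Real.sin (7 * π * l / 8) := by
  rw [qBracket, Int.cast_natCast, Int.cast_ofNat, ← mul_div_assoc, mul_comm (l : ℝ)]

/-- braiding-matrix entry identity for the 5A-algebra
(minimal model L(25/28,0), Kac parameters p = 7, p' = 8). -/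
theorem stmt_0 :
    let y : ℂ := Complex.exp (7 * Real.pi * Complex.I / 4)
    let b : ℕ → ℂ := fun l => 2 * Complex.I * Real.sin (7 * Real.pi * l / 8)
    let B44 : ℂ := (b 6 * b 3) / (b 5 * b 4) - (b 1 ^ 2 * (b 4 + b 6)) / (b 5 ^ 2 * b 6)
    let B23 : ℂ := y * (b 6 * b 7) / (b 4 * b 5)
    let B43 : ℂ := y ^ 2 * (b 1 * b 6) / (b 4 * b 5)
    let B24 : ℂ := -(y ^ (-3 : ℤ)) *
        ((b 1 * b 7 * (b 4 + b 6)) / (b 5 ^ 2 * b 4)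
          + (b 1 * b 7 * (b 5 + b 7)) / (b 6 ^ 2 * b 5))
    B44 * B23 - B43 * B24
        = ((Real.sqrt 2 - 1) / 2 : ℂ) + (((3 - 2 * Real.sqrt 2) / 2 : ℝ) : ℂ) * Complex.I
      ∧ B44 * B23 - B43 * B24 ≠ 0 := by
  intro y b B44 B23 B43 B24
  have hb (l : ℕ) : b l = qBracket ((7 : ℤ) * π / 8) l := (qBracket_seven_mul_pi_div_eight l).symm
  have h7 : Odd (7 : ℤ) := by decide
  have hcos : (Real.cos ((7 : ℤ) * π / 4) : ℂ) = √2 / 2 := mod_cast cos_seven_mul_pi_div_four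
  have hB44 : B44 = 1 - √2 / 2 := by
    simpa only [B44, hb, hcos, Nat.cast_ofNat, Nat.cast_one] using braiding_four_four h7
  have hB23 : B23 = y * (1 - √2 / 2) := by
    simpa only [B23, hb, hcos, Nat.cast_ofNat, Nat.cast_one] using braiding_two_three h7 y
  have hB43 : B43 = y ^ 2 * (1 - √2 / 2) := by
    simpa only [B43, hb, hcos, Nat.cast_ofNat, Nat.cast_one] using braiding_four_three h7 y
  have hB24 : B24 = -(y ^ (-3 : ℤ)) * (√2 / 2) := by
    simpa only [B24, hb, hcos, Nat.cast_ofNat, Nat.cast_one] using braiding_two_four h7 y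
  have hdet : B44 * B23 - B43 * B24 =
      ((√2 - 1) / 2 : ℂ) + (((3 - 2 * √2) / 2 : ℝ) : ℂ) * Complex.I := by
    rw [hB44, hB23, hB43, hB24, mul_mul_sub_sq_mul_mul_neg_zpow (Complex.exp_ne_zero _),
      one_sub_sqrt_two_mul_exp_add_exp_inv]
  exact ⟨hdet, hdet ▸ sqrt_two_sub_one_add_mul_I_ne_zero⟩
end

section
/- Let y = exp(7·π·i/4) ∈ ℂ and b_l = 2·i·sin(7·π·l/8) for positive integers l. Then −y^{−1}·((b_1·b_4)/(b_5·b_6))·( (b_1·b_3·(b_3 + b_5))/(b_5·b_4^2) + (b_1·b_3·(b_4 + b_6))/(b_5^2·b_6) ) = −y^{−1}. -/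
/-!
Put `[l] = q ^ l - q ^ (-l)`, so that `y = q ^ 2` and `b l = [l]` for `q = exp (7 * π * I / 8)`.
The recurrence `[1] * ([l - 1] + [l + 1]) = [2] * [l]` evaluates the sums `[3] + [5]` and
`[4] + [6]` and collapses the scalar multiplying `-y⁻¹` to `[3] * [2] ^ 2 / ([5] * [6] ^ 2)`.
As `q ^ 8 = -1`, the reflection `[8 - l] = [l]` turns this quotient into `1`.
-/

section QuantumBracket

variable {K : Type*} [Field K] {q : K}

/-- The unnormalised quantum integer `[l]′ = q ^ l - q ^ (-l)` entering the braiding matrices.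
The parameter is `q = y ^ (1 / 2)`, which avoids half-integral powers of `y`. -/
def quantumBracket (q : K) (l : ℤ) : K := q ^ l - q ^ (-l)

lemma quantumBracket_mul_sub_add_add (q : K) (k l : ℤ) :
    quantumBracket q k * (quantumBracket q (l - k) + quantumBracket q (l + k)) =
      quantumBracket q (2 * k) * quantumBracket q l := by
  obtain rfl | hq := eq_or_ne q 0
  · have h_zero (m : ℤ) : quantumBracket (0 : K) m = 0 := by
      obtain rfl | hm := eq_or_ne m 0 <;> simp [quantumBracket, zero_zpow, *]
    simp only [h_zero, mul_zero, add_zero]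
  simp only [quantumBracket, two_mul, zpow_neg, zpow_sub₀ hq, zpow_add₀ hq]
  field_simp
  ring

lemma quantumBracket_sub_of_zpow_eq_neg_one (hq : q ≠ 0) {m : ℤ} (hm : q ^ m = -1) (l : ℤ) :
    quantumBracket q (m - l) = quantumBracket q l := by
  simp only [quantumBracket, neg_sub, zpow_sub₀ hq, zpow_neg, hm]
  ring

lemma quantumBracket_eq_zero_iff (hq : q ≠ 0) {l : ℤ} :
    quantumBracket q l = 0 ↔ q ^ (2 * l) = 1 := by
  rw [quantumBracket, sub_eq_zero, zpow_neg, ← mul_eq_one_iff_eq_inv₀ (zpow_ne_zero l hq), two_mul,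
    zpow_add₀ hq]

lemma quantumBracket_eq_zero_iff_dvd {n : ℕ} [NeZero n] (hq : IsPrimitiveRoot q (2 * n)) {l : ℤ} :
    quantumBracket q l = 0 ↔ (n : ℤ) ∣ l := by
  have hq₀ : q ≠ 0 := hq.ne_zero (NeZero.ne _)
  rw [quantumBracket_eq_zero_iff hq₀, hq.zpow_eq_one_iff_dvd, Nat.cast_mul, Nat.cast_two]
  exact mul_dvd_mul_iff_left two_ne_zero

lemma braidingScalar_eq_quantumBracket_div (q : K) :
    let b := quantumBracket q
    b 4 ≠ 0 → b 6 ≠ 0 →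
    (b 1 * b 4) / (b 5 * b 6) *
        ((b 1 * b 3 * (b 3 + b 5)) / (b 5 * b 4 ^ 2)
          + (b 1 * b 3 * (b 4 + b 6)) / (b 5 ^ 2 * b 6)) =
      b 3 * b 2 ^ 2 / (b 5 * b 6 ^ 2) := by
  intro b h4 h6
  have h35 : b 1 * (b 3 + b 5) = b 2 * b 4 := quantumBracket_mul_sub_add_add q 1 4
  have h46 : b 1 * (b 4 + b 6) = b 2 * b 5 := quantumBracket_mul_sub_add_add q 1 5
  calc
    _ = b 1 * b 4 / (b 5 * b 6) *
          (b 3 * (b 1 * (b 3 + b 5)) / (b 5 * b 4 ^ 2)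
            + b 3 * (b 1 * (b 4 + b 6)) / (b 5 ^ 2 * b 6)) := by ring
    _ = b 1 * b 4 / (b 5 * b 6) *
          (b 3 * (b 2 * b 4) / (b 5 * b 4 ^ 2) + b 3 * (b 2 * b 5) / (b 5 ^ 2 * b 6)) := by
      rw [h35, h46]
    _ = b 3 * b 2 * (b 1 * (b 4 + b 6)) / (b 5 ^ 2 * b 6 ^ 2) := by
      field_simp
      ring
    _ = b 3 * b 2 ^ 2 / (b 5 * b 6 ^ 2) := by
      rw [h46]
      field_simp

theorem stmt_2_general (hq : IsPrimitiveRoot q 16) :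
    let y : K := q ^ 2
    let b : ℤ → K := quantumBracket q
    let E : K := -(y ^ (-1 : ℤ)) * ((b 1 * b 4) / (b 5 * b 6)) *
        ((b 1 * b 3 * (b 3 + b 5)) / (b 5 * b 4 ^ 2)
          + (b 1 * b 3 * (b 4 + b 6)) / (b 5 ^ 2 * b 6))
    E = -(y ^ (-1 : ℤ)) := by
  intro y b E
  have hq₀ : q ≠ 0 := hq.ne_zero (by norm_num)
  have h_pow : q ^ (8 : ℤ) = -1 := mod_cast
    (hq.pow (b := 2) (by norm_num) (by norm_num)).eq_neg_one_of_two_right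
  have h5 : b 5 = b 3 := quantumBracket_sub_of_zpow_eq_neg_one hq₀ h_pow 3
  have h6 : b 6 = b 2 := quantumBracket_sub_of_zpow_eq_neg_one hq₀ h_pow 2
  have hb_ne {l : ℤ} (hl : ¬ 8 ∣ l) : b l ≠ 0 :=
    mt (quantumBracket_eq_zero_iff_dvd (n := 8) hq).mp hl
  have h_quot : b 3 * b 2 ^ 2 / (b 5 * b 6 ^ 2) = 1 := by
    rw [h5, h6]
    exact div_self (mul_ne_zero (hb_ne (by norm_num)) (pow_ne_zero 2 (hb_ne (by norm_num))))
  calc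
    E = -(y ^ (-1 : ℤ)) * (b 3 * b 2 ^ 2 / (b 5 * b 6 ^ 2)) := by
      rw [← braidingScalar_eq_quantumBracket_div q (hb_ne (by norm_num)) (hb_ne (by norm_num)),
        ← mul_assoc]
    _ = -(y ^ (-1 : ℤ)) := by rw [h_quot, mul_one]

end QuantumBracket

lemma quantumBracket_exp_mul_I (θ : ℂ) (l : ℤ) :
    quantumBracket (Complex.exp (θ * Complex.I)) l = 2 * Complex.I * Complex.sin (θ * l) := by
  have h_exp (m : ℤ) :
      Complex.exp (θ * Complex.I) ^ m = Complex.exp (θ * m * Complex.I) := by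
    rw [← Complex.exp_int_mul]
    ring_nf
  calc
    _ = Complex.exp (θ * l * Complex.I) - Complex.exp (-(θ * l) * Complex.I) := by
      simp only [quantumBracket, h_exp, Int.cast_neg, mul_neg]
    _ = Complex.I * (2 * Complex.sin (θ * l)) := by
      rw [Complex.two_sin]
      linear_combination
        (Complex.exp (θ * l * Complex.I) - Complex.exp (-(θ * l) * Complex.I)) * Complex.I_mul_I
    _ = _ := by ring

/-- the product of braiding-matrix entries
(B_{3,3}^{4,4})_{4,2} · (B_{3,3}^{4,4})_{3,4} for the 5A-algebra equals −y⁻¹. -/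
theorem stmt_2 :
    let y : ℂ := Complex.exp (7 * Real.pi * Complex.I / 4)
    let b : ℕ → ℂ := fun l => 2 * Complex.I * Real.sin (7 * Real.pi * l / 8)
    let E : ℂ := -(y ^ (-1 : ℤ)) * ((b 1 * b 4) / (b 5 * b 6)) *
        ((b 1 * b 3 * (b 3 + b 5)) / (b 5 * b 4 ^ 2)
          + (b 1 * b 3 * (b 4 + b 6)) / (b 5 ^ 2 * b 6))
    E = -(y ^ (-1 : ℤ)) := by
  intro y b E
  let q : ℂ := Complex.exp (7 * Real.pi / 8 * Complex.I)
  have hq : IsPrimitiveRoot q 16 := by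
    convert Complex.isPrimitiveRoot_exp_of_coprime 7 16 (by norm_num) (by norm_num) using 2
    push_cast
    ring
  have hy : y = q ^ 2 := by
    simp only [y, q, ← Complex.exp_nat_mul]
    ring_nf
  have hb (l : ℕ) : b l = quantumBracket q l := by
    rw [quantumBracket_exp_mul_I]
    simp only [b]
    push_cast
    ring_nf
  simpa only [E, hy, hb, Nat.cast_ofNat, Nat.cast_one] using stmt_2_general hq
end

section
/- Let y = exp(7·π·i/4) ∈ ℂ and b_l = 2·i·sin(7·π·l/8) for positive integers l. Then y^{−1}·((b_4·b_3)/(b_6·b_5))·( (b_6·b_3)/(b_5·b_4) − (b_1^2·(b_4 + b_6))/(b_5^2·b_6) ) + y^{−1}·((b_1·b_4)/(b_5·b_6))·( (b_1·b_3·(b_3 + b_5))/(b_5·b_4^2) + (b_1·b_3·(b_4 + b_6))/(b_5^2·b_6) ) = √2·y^{−1} = 1 + i; in particular this quantity is nonzero. -/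
/-!
Put `t = y^(1/2)`, a primitive 16th root of unity, so that `b_l = t^l - t^(-l)`. Since `t^8 = -1`,
these numbers satisfy `b_3 = b_5`, and this reflection alone makes all the terms of the minor
containing `b_4 + b_6` cancel, leaving `y⁻¹ (1 + 2 b_1² / (b_4 b_6))`. Here `b_1² = y - 2 + y⁻¹`,
`b_4 = 2 y²` and `b_6 = y + y³`, so the minor is `1 - y²`; for `y = exp (7πi/4)` one has `y² = -i`.
-/

section Field

variable {K : Type*} [Field K]

/-- The number `[l]′ = y^(l/2) - y^(-l/2)`, as a function of the square root `t = y^(1/2)`: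
a choice of `t` settles the half-integral powers of `y`. -/
def qNum (t : K) (l : ℕ) : K := t ^ l - t⁻¹ ^ l

/-- The minor `B₃₂ B₄₄ - B₄₂ B₃₄` of the braiding matrix `B = B_{3,3}^{4,4}`, as a function of `y`
and of the numbers `b l = [l]′`. -/
def braidingMinor (y : K) (b : ℕ → K) : K :=
  y ^ (-1 : ℤ) * ((b 4 * b 3) / (b 6 * b 5)) *
      ((b 6 * b 3) / (b 5 * b 4) - (b 1 ^ 2 * (b 4 + b 6)) / (b 5 ^ 2 * b 6))
    + y ^ (-1 : ℤ) * ((b 1 * b 4) / (b 5 * b 6)) *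
      ((b 1 * b 3 * (b 3 + b 5)) / (b 5 * b 4 ^ 2)
        + (b 1 * b 3 * (b 4 + b 6)) / (b 5 ^ 2 * b 6))

theorem braidingMinor_eq_of_five_eq_three {b : ℕ → K} (y : K) (h₅₃ : b 5 = b 3) (h₃ : b 3 ≠ 0)
    (h₄ : b 4 ≠ 0) (h₆ : b 6 ≠ 0) :
    braidingMinor y b = y⁻¹ * (1 + 2 * b 1 ^ 2 / (b 4 * b 6)) := by
  rw [braidingMinor, h₅₃, zpow_neg_one]
  field_simp
  ring

theorem qNum_eq_add_pow {t : K} {l m : ℕ} (h : t ^ (l + m) = -1) :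
    qNum t l = t ^ l + t ^ m := by
  have inv_pow_eq : (t ^ l)⁻¹ = -t ^ m :=
    inv_eq_of_mul_eq_one_right (by rw [mul_neg, ← pow_add, h, neg_neg])
  rw [qNum, inv_pow, inv_pow_eq, sub_neg_eq_add]

theorem qNum_eq_qNum_of_pow_add {t : K} {l m : ℕ} (h : t ^ (l + m) = -1) :
    qNum t l = qNum t m := by
  rw [qNum_eq_add_pow h, qNum_eq_add_pow (add_comm l m ▸ h), add_comm]

theorem qNum_eq_zero_iff {t : K} (ht : t ≠ 0) (l : ℕ) : qNum t l = 0 ↔ t ^ (2 * l) = 1 := by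
  rw [qNum, sub_eq_zero, inv_pow, ← mul_eq_one_iff_eq_inv₀ (pow_ne_zero l ht), ← pow_add, two_mul]

theorem braidingMinor_qNum {t : K} (ht : IsPrimitiveRoot t 16) :
    braidingMinor (t ^ 2) (qNum t) = 1 - t ^ 4 := by
  have pow_eight : t ^ 8 = -1 :=
    (ht.pow (by norm_num) (by norm_num : 16 = 8 * 2)).eq_neg_one_of_two_right
  have ht₀ : t ≠ 0 := ht.ne_zero (by norm_num)
  have h₁ : qNum t 1 = t ^ 1 + t ^ 7 := qNum_eq_add_pow pow_eight
  have h₄ : qNum t 4 = t ^ 4 + t ^ 4 := qNum_eq_add_pow pow_eight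
  have h₆ : qNum t 6 = t ^ 6 + t ^ 2 := qNum_eq_add_pow pow_eight
  have h₅₃ : qNum t 5 = qNum t 3 := qNum_eq_qNum_of_pow_add pow_eight
  have qNum_ne_zero {l : ℕ} (hl : ¬16 ∣ 2 * l) : qNum t l ≠ 0 :=
    (qNum_eq_zero_iff ht₀ l).not.mpr (mt (ht.dvd_of_pow_eq_one _) hl)
  have h₃_ne : qNum t 3 ≠ 0 := qNum_ne_zero (by norm_num)
  have h₄_ne : qNum t 4 ≠ 0 := qNum_ne_zero (by norm_num)
  have h₆_ne : qNum t 6 ≠ 0 := qNum_ne_zero (by norm_num)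
  rw [braidingMinor_eq_of_five_eq_three _ h₅₃ h₃_ne h₄_ne h₆_ne]
  field_simp
  rw [h₁, h₄, h₆]
  linear_combination (2 * t ^ 8 + 2 * t ^ 6 + 2 * t ^ 2) * pow_eight

end Field

section Complex

open Complex
open scoped Real

theorem qNum_exp_mul_I (θ : ℝ) (l : ℕ) : qNum (exp (θ * I)) l = 2 * I * Real.sin (l * θ) := by
  have exp_pow : exp (θ * I) ^ l = exp (l * θ * I) := by rw [← exp_nat_mul, mul_assoc]
  have exp_inv_pow : (exp (θ * I))⁻¹ ^ l = exp (-(l * θ) * I) := by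
    rw [inv_pow, exp_pow, ← exp_neg, neg_mul]
  rw [qNum, exp_pow, exp_inv_pow, ofReal_sin, ofReal_mul, ofReal_natCast]
  linear_combination
    (exp (l * θ * I) - exp (-(l * θ) * I)) * I_sq - I * two_sin (l * θ : ℂ)

theorem isPrimitiveRoot_exp_seven_pi_div_eight_mul_I :
    IsPrimitiveRoot (exp ((7 * π / 8 : ℝ) * I)) 16 := by
  convert isPrimitiveRoot_exp_of_coprime 7 16 (by norm_num) (by norm_num) using 2
  push_cast
  ring

theorem exp_seven_pi_div_eight_mul_I_pow_four : exp ((7 * π / 8 : ℝ) * I) ^ 4 = -I := by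
  rw [← exp_nat_mul, ← exp_neg_pi_div_two_mul_I, ← exp_periodic.nat_mul 2 (-_ / _ * _)]
  congr 1
  push_cast
  ring

theorem sqrt_two_mul_exp_pi_div_four_mul_I : (√2 : ℂ) * exp ((π / 4 : ℝ) * I) = 1 + I := by
  have sqrt_two_sq : (√2 : ℂ) ^ 2 = 2 := mod_cast Real.sq_sqrt zero_le_two
  rw [exp_ofReal_mul_I, Real.cos_pi_div_four, Real.sin_pi_div_four]
  push_cast
  linear_combination (1 + I) / 2 * sqrt_two_sq

theorem inv_exp_seven_pi_div_four_mul_I :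
    (exp (7 * π * I / 4))⁻¹ = exp ((π / 4 : ℝ) * I) := by
  rw [← exp_neg, ← exp_periodic (-_)]
  congr 1
  push_cast
  ring

end Complex

/-- (B_{3,3}^{4,4})_{3,2}·(B_{3,3}^{4,4})_{4,4} − (B_{3,3}^{4,4})_{4,2}·(B_{3,3}^{4,4})_{3,4}
equals √2·y⁻¹ = 1 + i, in particular it is nonzero. -/
theorem stmt_3 :
    let y : ℂ := Complex.exp (7 * Real.pi * Complex.I / 4)
    let b : ℕ → ℂ := fun l => 2 * Complex.I * Real.sin (7 * Real.pi * l / 8)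
    let E : ℂ := y ^ (-1 : ℤ) * ((b 4 * b 3) / (b 6 * b 5)) *
        ((b 6 * b 3) / (b 5 * b 4) - (b 1 ^ 2 * (b 4 + b 6)) / (b 5 ^ 2 * b 6))
      + y ^ (-1 : ℤ) * ((b 1 * b 4) / (b 5 * b 6)) *
        ((b 1 * b 3 * (b 3 + b 5)) / (b 5 * b 4 ^ 2)
          + (b 1 * b 3 * (b 4 + b 6)) / (b 5 ^ 2 * b 6))
    E = (Real.sqrt 2 : ℂ) * y ^ (-1 : ℤ)
      ∧ E = 1 + Complex.I
      ∧ E ≠ 0 := by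
  intro y b E
  let t : ℂ := Complex.exp ((7 * Real.pi / 8 : ℝ) * Complex.I)
  have y_eq : y = t ^ 2 := by
    simp only [y, t, ← Complex.exp_nat_mul]
    push_cast
    ring_nf
  have b_eq : b = qNum t := by
    ext l
    rw [qNum_exp_mul_I, mul_comm (l : ℝ), ← mul_div_right_comm]
  have E_eq : E = 1 + Complex.I := calc
    E = braidingMinor (t ^ 2) (qNum t) := by rw [← y_eq, ← b_eq]; rfl
    _ = 1 - t ^ 4 := braidingMinor_qNum isPrimitiveRoot_exp_seven_pi_div_eight_mul_I
    _ = 1 + Complex.I := by rw [exp_seven_pi_div_eight_mul_I_pow_four, sub_neg_eq_add]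
  have sqrt_two_mul_y_inv : (Real.sqrt 2 : ℂ) * y ^ (-1 : ℤ) = 1 + Complex.I := by
    rw [zpow_neg_one, inv_exp_seven_pi_div_four_mul_I, sqrt_two_mul_exp_pi_div_four_mul_I]
  refine ⟨E_eq.trans sqrt_two_mul_y_inv.symm, E_eq, fun E_eq_zero => ?_⟩
  simpa using congrArg Complex.re (E_eq.symm.trans E_eq_zero)
end

section
/- Let B and T be functions from {2,3,4} × {2,3,4} to ℂ and let μ, γ ∈ ℂ. Set d_2 = 1, d_3 = μ, d_4 = γ. Suppose that for all j, k ∈ {2,3,4}: (i) B(2,j)·T(2,k) + B(3,j)·T(3,k) + B(4,j)·T(4,k) equals 1 if j = k and 0 otherwise, and (ii) d_2·B(2,j)·T(2,k) + d_3·B(3,j)·T(3,k) + d_4·B(4,j)·T(4,k) equals d_k if j = k and 0 otherwise. If B(3,2)·B(4,4) − B(4,2)·B(3,4) ≠ 0, then μ = 1. -/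
/-!
In matrix form, with `A j i = B i j` and `D = diagonal d`, the two systems say `A * T = 1` and
`A * D * T = D`. Hence `A` commutes with `D`, so a nonzero entry of `A` forces the diagonal entries
of `D` at its row and its column to agree. The nonzero minor of `A` with rows `2, 4` and columns
`3, 4` has a nonzero term: either `A 2 3 ≠ 0` links `2` to `3` directly, or `A 2 4 * A 4 3 ≠ 0`
links them through `4`.
-/

open Matrix

theorem semiconjBy_of_mul_mul_eq {M : Type*} [Monoid M] {a b x y : M} (hba : b * a = 1)
    (h : a * x * b = y) : SemiconjBy a x y := by
  rw [SemiconjBy, ← h, mul_assoc, hba, mul_one]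

section CommuteDiagonal

variable {ι R : Type*} [Fintype ι] [DecidableEq ι] [CommRing R]

theorem commute_diagonal_of_mul_mul_eq {A T : Matrix ι ι R} {d : ι → R} (hAT : A * T = 1)
    (h : A * diagonal d * T = diagonal d) : Commute A (diagonal d) :=
  semiconjBy_of_mul_mul_eq (mul_eq_one_comm.mp hAT) h

variable [NoZeroDivisors R] {A : Matrix ι ι R} {d : ι → R}

theorem eq_of_commute_diagonal_of_apply_ne_zero (h : Commute A (diagonal d)) {i j : ι}
    (hij : A i j ≠ 0) : d i = d j := by
  have entry : A i j * d j = d i * A i j := by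
    simpa only [mul_diagonal, diagonal_mul] using congr_fun₂ h.eq i j
  exact mul_right_cancel₀ hij (entry.symm.trans (mul_comm _ _))

theorem eq_of_commute_diagonal_of_minor_ne_zero (h : Commute A (diagonal d)) {i j k : ι}
    (hminor : A i j * A k k - A i k * A k j ≠ 0) : d i = d j := by
  by_cases hij : A i j = 0
  · have hpath : A i k * A k j ≠ 0 := by simpa [hij] using hminor
    calc
      d i = d k := eq_of_commute_diagonal_of_apply_ne_zero h (left_ne_zero_of_mul hpath)
      _ = d j := eq_of_commute_diagonal_of_apply_ne_zero h (right_ne_zero_of_mul hpath)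
  · exact eq_of_commute_diagonal_of_apply_ne_zero h hij

end CommuteDiagonal

theorem stmt_6_general {ι R : Type*} [DecidableEq ι] [CommRing R] [NoZeroDivisors R]
    (s : Finset ι) (B T : ι → ι → R) (d : ι → R)
    (hi : ∀ j ∈ s, ∀ k ∈ s, ∑ i ∈ s, B i j * T i k = if j = k then 1 else 0)
    (hii : ∀ j ∈ s, ∀ k ∈ s, ∑ i ∈ s, d i * B i j * T i k = if j = k then d k else 0)
    {a b c : ι} (ha : a ∈ s) (hb : b ∈ s) (hc : c ∈ s)
    (hminor : B b a * B c c - B c a * B b c ≠ 0) : d a = d b := by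
  let A : Matrix s s R := of fun j i ↦ B i j
  let T' : Matrix s s R := of fun i k ↦ T i k
  let d' : s → R := fun i ↦ d i
  have hAT : A * T' = 1 := by
    ext j k
    simpa [A, T', mul_apply, one_apply, ← Finset.sum_coe_sort s] using hi j j.2 k k.2
  have hADT : A * diagonal d' * T' = diagonal d' := by
    ext j k
    rw [mul_apply]
    rcases eq_or_ne j k with rfl | hjk
    · simpa [A, T', d', mul_comm (d _), ← Finset.sum_coe_sort s] using hii j j.2 j j.2
    · simpa [A, T', d', mul_comm (d _), hjk, ← Finset.sum_coe_sort s]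
        using hii j j.2 k k.2
  exact eq_of_commute_diagonal_of_minor_ne_zero (i := ⟨a, ha⟩) (j := ⟨b, hb⟩) (k := ⟨c, hc⟩)
    (commute_diagonal_of_mul_mul_eq hAT hADT) hminor

/-- the linear-algebra kernel of Claim 4 in the uniqueness theorem
for the 5A-algebra. -/
theorem stmt_6 (B T : ℕ → ℕ → ℂ) (μ γ : ℂ) (d : ℕ → ℂ)
    (hd2 : d 2 = 1) (hd3 : d 3 = μ) (hd4 : d 4 = γ)
    (hi : ∀ j ∈ ({2, 3, 4} : Set ℕ), ∀ k ∈ ({2, 3, 4} : Set ℕ),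
      B 2 j * T 2 k + B 3 j * T 3 k + B 4 j * T 4 k = if j = k then 1 else 0)
    (hii : ∀ j ∈ ({2, 3, 4} : Set ℕ), ∀ k ∈ ({2, 3, 4} : Set ℕ),
      d 2 * B 2 j * T 2 k + d 3 * B 3 j * T 3 k + d 4 * B 4 j * T 4 k
        = if j = k then d k else 0)
    (hdet : B 3 2 * B 4 4 - B 4 2 * B 3 4 ≠ 0) :
    μ = 1 := by
  have h : d 2 = d 3 := stmt_6_general {2, 3, 4} B T d (by simpa [← add_assoc] using hi)
    (by simpa [← add_assoc] using hii) (by simp) (by simp) (by simp) hdet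
  rw [← hd3, ← h, hd2]
end
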